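/- arXiv:1907.07801 — 6 statements merged into one kernel-verified Lean document; each statement's English description precedes it below -/
import Mathlib

section
/- The operation * on 𝒬 is associative, and for U, V, W ∈ 𝒬 the triple product is given explicitly by U * V * W = {A ∪ B ∪ C : A ∈ U, B ∈ V, C ∈ W, A ∠ B, A ∠ C, B ∠ C}. -/
def Angle {n : ℕ} (A B : Set (Fin n)) : Prop := ∀ a ∈ A, ∀ b ∈ B, a ≤ b

def UpClosed {n : ℕ} (U : Set (Set (Fin n))) : Prop :=
  ∀ ⦃A B : Set (Fin n)⦄, A ∈ U → A ⊆ B → B ∈ U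

def QStar {n : ℕ} (U V : Set (Set (Fin n))) : Set (Set (Fin n)) :=
  {C | ∃ A ∈ U, ∃ B ∈ V, Angle A B ∧ C = A ∪ B}

/-!
`A ∪ B` lies below `C` exactly when both `A` and `B` do, and dually for unions on the right. Hence
either bracketing of a triple product imposes precisely the three pairwise conditions on `A`, `B`
and `C`, and both bracketings give the same explicit set.
-/

section OrderedUnion

variable {α : Type*} [LE α]

/-- The product `U * V` of two families of subsets of an arbitrary type with a relation `≤`: all
unions `A ∪ B` of a member of `U` with a member of `V` lying above it. The condition `A ∠ B` is
encoded as `A ⊆ lowerBounds B`, so for `α = Fin n` this is `QStar` by definitional unfolding. -/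
def orderedUnion (U V : Set (Set α)) : Set (Set α) :=
  {C | ∃ A ∈ U, ∃ B ∈ V, A ⊆ lowerBounds B ∧ C = A ∪ B}

theorem subset_lowerBounds_union_iff {A B C : Set α} :
    A ⊆ lowerBounds (B ∪ C) ↔ A ⊆ lowerBounds B ∧ A ⊆ lowerBounds C :=
  ⟨fun h => ⟨fun _ ha _ hb => h ha (.inl hb), fun _ ha _ hc => h ha (.inr hc)⟩,
    fun ⟨hB, hC⟩ _ ha _ hx => hx.elim (fun hb => hB ha hb) (fun hc => hC ha hc)⟩

theorem orderedUnion_orderedUnion_left (U V W : Set (Set α)) :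
    orderedUnion (orderedUnion U V) W =
      {D | ∃ A ∈ U, ∃ B ∈ V, ∃ C ∈ W, A ⊆ lowerBounds B ∧ A ⊆ lowerBounds C ∧
        B ⊆ lowerBounds C ∧ D = A ∪ B ∪ C} := by
  ext D
  constructor
  · rintro ⟨_, ⟨A, hA, B, hB, hAB, rfl⟩, C, hC, hABC, rfl⟩
    obtain ⟨hAC, hBC⟩ := Set.union_subset_iff.mp hABC
    exact ⟨A, hA, B, hB, C, hC, hAB, hAC, hBC, rfl⟩
  · rintro ⟨A, hA, B, hB, C, hC, hAB, hAC, hBC, rfl⟩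
    exact ⟨A ∪ B, ⟨A, hA, B, hB, hAB, rfl⟩, C, hC, Set.union_subset hAC hBC, rfl⟩

theorem orderedUnion_orderedUnion_right (U V W : Set (Set α)) :
    orderedUnion U (orderedUnion V W) =
      {D | ∃ A ∈ U, ∃ B ∈ V, ∃ C ∈ W, A ⊆ lowerBounds B ∧ A ⊆ lowerBounds C ∧
        B ⊆ lowerBounds C ∧ D = A ∪ B ∪ C} := by
  ext D
  constructor
  · rintro ⟨A, hA, _, ⟨B, hB, C, hC, hBC, rfl⟩, hABC, rfl⟩
    obtain ⟨hAB, hAC⟩ := subset_lowerBounds_union_iff.mp hABC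
    exact ⟨A, hA, B, hB, C, hC, hAB, hAC, hBC, (Set.union_assoc A B C).symm⟩
  · rintro ⟨A, hA, B, hB, C, hC, hAB, hAC, hBC, rfl⟩
    exact ⟨A, hA, B ∪ C, ⟨B, hB, C, hC, hBC, rfl⟩,
      subset_lowerBounds_union_iff.mpr ⟨hAB, hAC⟩, Set.union_assoc A B C⟩

theorem stmt1_general (U V W : Set (Set α)) :
    orderedUnion (orderedUnion U V) W = orderedUnion U (orderedUnion V W) ∧
      orderedUnion (orderedUnion U V) W =
        {D | ∃ A ∈ U, ∃ B ∈ V, ∃ C ∈ W, A ⊆ lowerBounds B ∧ A ⊆ lowerBounds C ∧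
          B ⊆ lowerBounds C ∧ D = A ∪ B ∪ C} :=
  ⟨(orderedUnion_orderedUnion_left U V W).trans (orderedUnion_orderedUnion_right U V W).symm,
    orderedUnion_orderedUnion_left U V W⟩

end OrderedUnion

theorem stmt1 {n : ℕ} (hn : 1 ≤ n) (U V W : Set (Set (Fin n)))
    (hU : UpClosed U) (hV : UpClosed V) (hW : UpClosed W) :
    QStar (QStar U V) W = QStar U (QStar V W) ∧
      QStar (QStar U V) W =
        {D | ∃ A ∈ U, ∃ B ∈ V, ∃ C ∈ W,
          Angle A B ∧ Angle A C ∧ Angle B C ∧ D = A ∪ B ∪ C} :=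
  stmt1_general U V W
end

section
/- Let 𝔸 = (A₁, …, A_r) be a (nonempty) list of subsets of N. Then the set T(𝔸) of thread sets of 𝔸 equals the iterated product vA₁ * vA₂ * ⋯ * vA_r in 𝒬. -/
/-- `vA = {B : B ∩ A ≠ ∅}`. -/
def VSet {n : ℕ} (A : Set (Fin n)) : Set (Set (Fin n)) := {B | (B ∩ A).Nonempty}

/-- `t` is a thread for the list `𝔸`: it has the same length, `tᵢ ∈ Aᵢ` for all `i`,
and `t₁ ≤ t₂ ≤ ⋯ ≤ t_r`. -/
def IsThread {n : ℕ} (𝔸 : List (Set (Fin n))) (t : List (Fin n)) : Prop :=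
  List.Forall₂ (fun a A => a ∈ A) t 𝔸 ∧ List.Chain' (· ≤ ·) t

/-- `T(𝔸)`: the set of thread sets of `𝔸`, i.e. subsets of `N` containing
all entries of some thread for `𝔸`. -/
def ThreadSets {n : ℕ} (𝔸 : List (Set (Fin n))) : Set (Set (Fin n)) :=
  {S | ∃ t : List (Fin n), IsThread 𝔸 t ∧ ∀ a ∈ t, a ∈ S}

/-!
Sending a list of sets to its collection of thread sets turns concatenation into `*`. The only point
that is not bookkeeping is that a set `S` containing a concatenated thread `t ++ u` splits as a
product: cut `S` into the elements below all of `u` and the elements above all of those. The order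
being total, the two halves cover `S`.
-/

theorem lowerBounds_union_upperBounds_lowerBounds {α : Type*} [LinearOrder α] (s : Set α) :
    lowerBounds s ∪ upperBounds (lowerBounds s) = Set.univ := by
  refine Set.eq_univ_of_forall fun x => or_iff_not_imp_left.mpr fun hx => ?_
  obtain ⟨b, hb, hbx⟩ : ∃ b ∈ s, b < x := by simpa [mem_lowerBounds] using hx
  exact fun a ha => (ha hb).trans hbx.le

theorem forall₂_append_right_iff {α β : Type*} {R : α → β → Prop} {t : List α} {K L : List β} :
    List.Forall₂ R t (K ++ L) ↔
      ∃ t₁ t₂, List.Forall₂ R t₁ K ∧ List.Forall₂ R t₂ L ∧ t = t₁ ++ t₂ := by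
  constructor
  · intro h
    exact ⟨t.take K.length, t.drop K.length, List.forall₂_take_append t K L h,
      List.forall₂_drop_append t K L h, (List.take_append_drop _ _).symm⟩
  · rintro ⟨t₁, t₂, h₁, h₂, rfl⟩
    exact List.rel_append h₁ h₂

section Threads

variable {n : ℕ}

theorem Angle.mono {A A' B B' : Set (Fin n)} (h : Angle A' B') (hA : A ⊆ A') (hB : B ⊆ B') :
    Angle A B :=
  fun a ha b hb => h a (hA ha) b (hB hb)

theorem Angle.exists_superset_union_eq {A B S : Set (Fin n)} (h : Angle A B) (hA : A ⊆ S)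
    (hB : B ⊆ S) : ∃ A' B', A ⊆ A' ∧ B ⊆ B' ∧ Angle A' B' ∧ A' ∪ B' = S := by
  refine ⟨S ∩ lowerBounds B, S ∩ upperBounds (lowerBounds B), ?_, ?_, ?_, ?_⟩
  · exact Set.subset_inter hA h
  · exact Set.subset_inter hB (subset_upperBounds_lowerBounds B)
  · exact fun a ha b hb => hb.2 ha.2
  · rw [← Set.inter_union_distrib_left, lowerBounds_union_upperBounds_lowerBounds, Set.inter_univ]

theorem isThread_iff_forall₂_and_pairwise {L : List (Set (Fin n))} {t : List (Fin n)} :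
    IsThread L t ↔ List.Forall₂ (fun a A => a ∈ A) t L ∧ t.Pairwise (· ≤ ·) :=
  and_congr_right' List.isChain_iff_pairwise

theorem isThread_append_iff {K L : List (Set (Fin n))} {t : List (Fin n)} :
    IsThread (K ++ L) t ↔ ∃ t₁ t₂, IsThread K t₁ ∧ IsThread L t₂ ∧
      Angle {a | a ∈ t₁} {b | b ∈ t₂} ∧ t = t₁ ++ t₂ := by
  simp only [isThread_iff_forall₂_and_pairwise, forall₂_append_right_iff]
  constructor
  · rintro ⟨⟨t₁, t₂, h₁, h₂, rfl⟩, hsorted⟩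
    obtain ⟨hsorted₁, hsorted₂, hle⟩ := List.pairwise_append.mp hsorted
    exact ⟨t₁, t₂, ⟨h₁, hsorted₁⟩, ⟨h₂, hsorted₂⟩, hle, rfl⟩
  · rintro ⟨t₁, t₂, ⟨h₁, hsorted₁⟩, ⟨h₂, hsorted₂⟩, hle, rfl⟩
    exact ⟨⟨t₁, t₂, h₁, h₂, rfl⟩, List.pairwise_append.mpr ⟨hsorted₁, hsorted₂, hle⟩⟩

theorem threadSets_append (K L : List (Set (Fin n))) :
    ThreadSets (K ++ L) = QStar (ThreadSets K) (ThreadSets L) := by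
  ext S
  constructor
  · rintro ⟨_, ht, htS⟩
    obtain ⟨t₁, t₂, ht₁, ht₂, hangle, rfl⟩ := isThread_append_iff.mp ht
    obtain ⟨ht₁S, ht₂S⟩ := List.forall_mem_append.mp htS
    obtain ⟨X, Y, ht₁X, ht₂Y, hXY, rfl⟩ := hangle.exists_superset_union_eq ht₁S ht₂S
    exact ⟨X, ⟨t₁, ht₁, ht₁X⟩, Y, ⟨t₂, ht₂, ht₂Y⟩, hXY, rfl⟩
  · rintro ⟨X, ⟨t₁, ht₁, ht₁X⟩, Y, ⟨t₂, ht₂, ht₂Y⟩, hXY, rfl⟩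
    refine ⟨t₁ ++ t₂, isThread_append_iff.mpr ⟨t₁, t₂, ht₁, ht₂, hXY.mono ht₁X ht₂Y, rfl⟩, ?_⟩
    exact List.forall_mem_append.mpr
      ⟨fun a ha => Or.inl (ht₁X a ha), fun b hb => Or.inr (ht₂Y b hb)⟩

theorem isThread_singleton_iff {A : Set (Fin n)} {t : List (Fin n)} :
    IsThread [A] t ↔ ∃ a ∈ A, t = [a] := by
  constructor
  · rintro ⟨_ | ⟨ha, _ | _⟩, -⟩
    exact ⟨_, ha, rfl⟩
  · rintro ⟨a, ha, rfl⟩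
    exact ⟨.cons ha .nil, List.isChain_singleton a⟩

theorem threadSets_singleton (A : Set (Fin n)) : ThreadSets [A] = VSet A := by
  ext S
  simp [ThreadSets, isThread_singleton_iff, VSet, Set.Nonempty, and_comm]

theorem foldl_qStar_threadSets (K L : List (Set (Fin n))) :
    List.foldl QStar (ThreadSets K) (L.map VSet) = ThreadSets (K ++ L) := by
  induction L generalizing K with
  | nil => simp
  | cons A L ih =>
    rw [List.map_cons, List.foldl_cons, ← threadSets_singleton, ← threadSets_append, ih,
      List.append_assoc, List.singleton_append]

end Threads

theorem stmt6 {n : ℕ} (hn : 1 ≤ n) (A : Set (Fin n)) (l : List (Set (Fin n))) :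
    ThreadSets (A :: l) = List.foldl QStar (VSet A) (l.map VSet) := by
  rw [← threadSets_singleton, foldl_qStar_threadSets, List.singleton_append]
end

section
/- Let U, V be upward-closed subsets of 𝒫 and let C ∈ U*V. Then the poset σ/C = {(A,B) : A ∈ U, B ∈ V, A ∠ B, A ∪ B ⊆ C}, ordered componentwise by inclusion, is strongly contractible. (This says the map σ(A,B) = A ∪ B from U ⊛ V = {(A,B) ∈ U × V : A ∠ B} to U*V is homotopy cofinal.) -/
/-- A poset is strongly contractible if its identity is related to a constant map by the
reflexive-transitive closure of pointwise comparability of monotone self-maps. -/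
def StronglyContractible (P : Type*) [Preorder P] : Prop :=
  ∃ p : P, Relation.ReflTransGen (fun f g : P →o P => f ≤ g ∨ g ≤ f)
    OrderHom.id ((OrderHom.const P) p)

/-!
Among the members of `U` contained in `C`, choose `A₀` whose lower closure is least; this is
possible because the lower sets of a well-order are themselves well-ordered. Every element of `A₀`
then lies below an element of each such `A`, so `A ∠ B` implies `A₀ ∠ B`, and the zigzag
`(A, B) ≤ (A₀ ∪ A, B) ≥ (A₀, B) ≤ (A₀, C ∩ upperBounds A₀)` stays inside `σ/C` and ends at a
constant.
-/

theorem StronglyContractible.of_le_ge_le {P : Type*} [Preorder P] {f g : P →o P} {p : P}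
    (id_le : OrderHom.id ≤ f) (ge : g ≤ f) (le_const : g ≤ OrderHom.const P p) :
    StronglyContractible P :=
  ⟨p, ((Relation.ReflTransGen.single (.inl id_le)).tail (.inr ge)).tail (.inl le_const)⟩

/-- `A₀` is a lowermost member of the family `S`: its lower closure is least among the lower
closures of the members of `S`, i.e. each element of `A₀` is at most some element of each
`A ∈ S`. It need not be unique. -/
structure IsLowermost {α : Type*} [Preorder α] (S : Set (Set α)) (A₀ : Set α) : Prop where
  mem : A₀ ∈ S
  subset_lowerClosure : ∀ A ∈ S, A₀ ⊆ lowerClosure A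

theorem IsLowermost.le_of_forall_le {α : Type*} [Preorder α] {S : Set (Set α)} {A₀ A B : Set α}
    (hA₀ : IsLowermost S A₀) (hA : A ∈ S) (hAB : ∀ a ∈ A, ∀ b ∈ B, a ≤ b) :
    ∀ a ∈ A₀, ∀ b ∈ B, a ≤ b := by
  intro a₀ ha₀ b hb
  obtain ⟨a, ha, ha₀a⟩ := hA₀.subset_lowerClosure A hA ha₀
  exact ha₀a.trans (hAB a ha b hb)

theorem exists_isLowermost {α : Type*} [LinearOrder α] [WellFoundedLT α] {S : Set (Set α)}
    (hS : S.Nonempty) : ∃ A₀, IsLowermost S A₀ := by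
  by_cases hcofinal : ∀ A ∈ S, ∀ x, x ∈ lowerClosure A
  · obtain ⟨A₀, hA₀⟩ := hS
    exact ⟨A₀, hA₀, fun A hA x _ => hcofinal A hA x⟩
  -- The least point missed by some lower closure is missed by the least lower closure.
  · push Not at hcofinal
    obtain ⟨A₁, hA₁, x₁, hx₁⟩ := hcofinal
    obtain ⟨x, ⟨A₀, hA₀, hx⟩, hmin⟩ := wellFounded_lt.has_min
      {x | ∃ A ∈ S, x ∉ lowerClosure A} ⟨x₁, A₁, hA₁, hx₁⟩
    refine ⟨A₀, hA₀, fun A hA a ha => ?_⟩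
    have hax : a < x := lt_of_not_ge fun hxa => hx ⟨a, ha, hxa⟩
    by_contra haA
    exact hmin a ⟨A, hA, haA⟩ hax

/-- The comma poset `σ/C` over an arbitrary preorder `α`, with `A ∠ B` written out. -/
abbrev CommaPoset {α : Type*} [Preorder α] (U V : Set (Set α)) (C : Set α) : Type _ :=
  {p : Set α × Set α // p.1 ∈ U ∧ p.2 ∈ V ∧ (∀ a ∈ p.1, ∀ b ∈ p.2, a ≤ b) ∧ p.1 ∪ p.2 ⊆ C}

namespace CommaPoset

variable {α : Type*} [Preorder α] {U V : Set (Set α)} {A₀ C : Set α}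

theorem fst_mem (p : CommaPoset U V C) : p.1.1 ∈ U ∩ 𝒫 C :=
  ⟨p.2.1, Set.subset_union_left.trans p.2.2.2.2⟩

theorem snd_subset (p : CommaPoset U V C) : p.1.2 ⊆ C :=
  Set.subset_union_right.trans p.2.2.2.2

theorem le_of_isLowermost (hA₀ : IsLowermost (U ∩ 𝒫 C) A₀) (p : CommaPoset U V C) :
    ∀ a ∈ A₀, ∀ b ∈ p.1.2, a ≤ b :=
  hA₀.le_of_forall_le p.fst_mem p.2.2.2.1

/-- The self-map `(A, B) ↦ (A₀ ∪ A, B)` of `σ/C`, the upper bound in the zigzag from the identity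
to `replaceFst`. -/
def unionFst (hU : IsUpperSet U) (hA₀ : IsLowermost (U ∩ 𝒫 C) A₀) :
    CommaPoset U V C →o CommaPoset U V C where
  toFun p := ⟨(A₀ ∪ p.1.1, p.1.2), hU Set.subset_union_left hA₀.mem.1, p.2.2.1,
    fun a ha => ha.elim (p.le_of_isLowermost hA₀ a) (p.2.2.2.1 a),
    Set.union_subset (Set.union_subset hA₀.mem.2 p.fst_mem.2) p.snd_subset⟩
  monotone' _ _ hpq := ⟨Set.union_subset_union_right A₀ hpq.1, hpq.2⟩

/-- The self-map `(A, B) ↦ (A₀, B)` of `σ/C`. -/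
def replaceFst (hA₀ : IsLowermost (U ∩ 𝒫 C) A₀) : CommaPoset U V C →o CommaPoset U V C where
  toFun p := ⟨(A₀, p.1.2), hA₀.mem.1, p.2.2.1, p.le_of_isLowermost hA₀,
    Set.union_subset hA₀.mem.2 p.snd_subset⟩
  monotone' _ _ hpq := ⟨le_rfl, hpq.2⟩

theorem snd_subset_inter_upperBounds (hA₀ : IsLowermost (U ∩ 𝒫 C) A₀) (p : CommaPoset U V C) :
    p.1.2 ⊆ C ∩ upperBounds A₀ :=
  fun b hb => ⟨p.snd_subset hb, fun a ha => p.le_of_isLowermost hA₀ a ha b hb⟩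

theorem stronglyContractible_of_isLowermost (hU : IsUpperSet U) (hV : IsUpperSet V)
    (p₀ : CommaPoset U V C) (hA₀ : IsLowermost (U ∩ 𝒫 C) A₀) :
    StronglyContractible (CommaPoset U V C) := by
  let apex : CommaPoset U V C :=
    ⟨(A₀, C ∩ upperBounds A₀), hA₀.mem.1, hV (p₀.snd_subset_inter_upperBounds hA₀) p₀.2.2.1,
      fun _ ha _ hb => hb.2 ha, Set.union_subset hA₀.mem.2 Set.inter_subset_left⟩
  have id_le : OrderHom.id ≤ unionFst (V := V) hU hA₀ :=
    fun _ => ⟨Set.subset_union_right, le_rfl⟩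
  have replace_le_union : replaceFst (V := V) hA₀ ≤ unionFst hU hA₀ :=
    fun _ => ⟨Set.subset_union_left, le_rfl⟩
  have replace_le_apex : replaceFst hA₀ ≤ OrderHom.const _ apex :=
    fun p => ⟨le_rfl, p.snd_subset_inter_upperBounds hA₀⟩
  exact .of_le_ge_le id_le replace_le_union replace_le_apex

end CommaPoset

theorem stmt10_general {α : Type*} [LinearOrder α] [WellFoundedLT α] {U V : Set (Set α)}
    {C : Set α} (hU : IsUpperSet U) (hV : IsUpperSet V) (hne : Nonempty (CommaPoset U V C)) :
    StronglyContractible (CommaPoset U V C) := by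
  obtain ⟨p⟩ := hne
  obtain ⟨A₀, hA₀⟩ := exists_isLowermost ⟨p.1.1, p.fst_mem⟩
  exact CommaPoset.stronglyContractible_of_isLowermost hU hV p hA₀

/-- The comma poset `σ/C` for `σ : U ⊛ V → U*V`, `σ(A,B) = A ∪ B`, is strongly
contractible; i.e. `σ` is homotopy cofinal. -/
theorem stmt10 {n : ℕ} (hn : 1 ≤ n) (U V : Set (Set (Fin n)))
    (hU : UpClosed U) (hV : UpClosed V) (C : Set (Fin n)) (hC : C ∈ QStar U V) :
    StronglyContractible
      {p : Set (Fin n) × Set (Fin n) //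
        p.1 ∈ U ∧ p.2 ∈ V ∧ Angle p.1 p.2 ∧ p.1 ∪ p.2 ⊆ C} := by
  obtain ⟨A, hA, B, hB, hAB, hCAB⟩ := hC
  exact stmt10_general (fun _ _ hsub hmem => hU hmem hsub) (fun _ _ hsub hmem => hV hmem hsub)
    ⟨(A, B), hA, hB, hAB, hCAB.ge⟩
end

section
/- Let 𝕄 = {(A,B) ∈ 𝒫 × 𝒫 : A ∠ B}, ordered componentwise by inclusion, and define for 0 ≤ i ≤ n* the maps α_{2i}(A,B) = (A_{<i}, A_{≥i} ∪ B), α_{2i+1}(A,B) = (A_{≤i}, A_{≥i} ∪ B), β_{2i}(A,B) = (A ∪ B_{<i}, B_{≥i}), β_{2i+1}(A,B) = (A ∪ B_{≤i}, B_{≥i}) (where A_{<i} = {a ∈ A : a < i}, etc.). Then: all α_j and β_j map 𝕄 into 𝕄 and are monotone; σ ∘ α_j = σ and σ ∘ β_j = σ where σ(A,B) = A ∪ B; α_0(A,B) = (∅, A ∪ B), α_{2n*}(A,B) = (A,B), β_0(A,B) = (A,B), β_{2n*}(A,B) = (A ∪ B, ∅); and the pointwise inequalities α_{2i} ≤ α_{2i+1}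 ≥ α_{2i+2} and β_{2i} ≤ β_{2i+1} ≥ β_{2i+2} hold. -/
/-- `α_{2i}(A,B) = (A_{<i}, A_{≥i} ∪ B)`. -/
def alphaE {n : ℕ} (i : ℕ) (p : Set (Fin n) × Set (Fin n)) : Set (Fin n) × Set (Fin n) :=
  ({a ∈ p.1 | (a : ℕ) < i}, {a ∈ p.1 | i ≤ (a : ℕ)} ∪ p.2)

/-- `α_{2i+1}(A,B) = (A_{≤i}, A_{≥i} ∪ B)`. -/
def alphaO {n : ℕ} (i : ℕ) (p : Set (Fin n) × Set (Fin n)) : Set (Fin n) × Set (Fin n) :=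
  ({a ∈ p.1 | (a : ℕ) ≤ i}, {a ∈ p.1 | i ≤ (a : ℕ)} ∪ p.2)

/-- `β_{2i}(A,B) = (A ∪ B_{<i}, B_{≥i})`. -/
def betaE {n : ℕ} (i : ℕ) (p : Set (Fin n) × Set (Fin n)) : Set (Fin n) × Set (Fin n) :=
  (p.1 ∪ {b ∈ p.2 | (b : ℕ) < i}, {b ∈ p.2 | i ≤ (b : ℕ)})

/-- `β_{2i+1}(A,B) = (A ∪ B_{≤i}, B_{≥i})`. -/
def betaO {n : ℕ} (i : ℕ) (p : Set (Fin n) × Set (Fin n)) : Set (Fin n) × Set (Fin n) :=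
  (p.1 ∪ {b ∈ p.2 | (b : ℕ) ≤ i}, {b ∈ p.2 | i ≤ (b : ℕ)})

/-!
Let `L` and `U` be sets covering the ground set, every element of `L` lying below every element of
`U`. Sending `(A, B)` to `(A ∩ L, (A ∩ U) ∪ B)` preserves `A ∪ B` and the relation `A ∠ B`, and
is monotone in `L`, `U` and `(A, B)`. Each `α_j` is such a map, with `(L, U)` equal to
`({a < i}, {a ≥ i})` for `j = 2i` and to `({a ≤ i}, {a ≥ i})` for `j = 2i + 1`; the zigzag of
inequalities between the `α_j` is thus the zigzag of inclusions between these pairs. The `β_j` are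
obtained dually, from `(A, B) ↦ (A ∪ (B ∩ L), B ∩ U)`.
-/

open Set

section Transfer

variable {X : Type*} {L L₁ L₂ U U₁ U₂ : Set X} {p q : Set X × Set X}

/-- The common form of the maps `α_j`: the part of the first component in `U` is put into the second
component, and only its part in `L` is retained. The sets `L` and `U` need not be disjoint, since
for odd `j` they share the point `i`. -/
def transferRight (L U : Set X) (p : Set X × Set X) : Set X × Set X :=
  (p.1 ∩ L, p.1 ∩ U ∪ p.2)

/-- The common form of the maps `β_j`: the part of the second component in `L` is put into the first
component, and only its part in `U` is retained. -/
def transferLeft (L U : Set X) (p : Set X × Set X) : Set X × Set X :=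
  (p.1 ∪ p.2 ∩ L, p.2 ∩ U)

theorem transferRight_mono (hL : L₁ ⊆ L₂) (hU : U₁ ⊆ U₂) (hpq : p ≤ q) :
    transferRight L₁ U₁ p ≤ transferRight L₂ U₂ q :=
  ⟨inter_subset_inter hpq.1 hL, union_subset_union (inter_subset_inter hpq.1 hU) hpq.2⟩

theorem transferLeft_mono (hL : L₁ ⊆ L₂) (hU : U₁ ⊆ U₂) (hpq : p ≤ q) :
    transferLeft L₁ U₁ p ≤ transferLeft L₂ U₂ q :=
  ⟨union_subset_union hpq.1 (inter_subset_inter hpq.2 hL), inter_subset_inter hpq.2 hU⟩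

theorem monotone_transferRight (L U : Set X) : Monotone (transferRight L U) :=
  fun _ _ => transferRight_mono Subset.rfl Subset.rfl

theorem monotone_transferLeft (L U : Set X) : Monotone (transferLeft L U) :=
  fun _ _ => transferLeft_mono Subset.rfl Subset.rfl

theorem fst_union_snd_transferRight (hLU : L ∪ U = univ) (p : Set X × Set X) :
    (transferRight L U p).1 ∪ (transferRight L U p).2 = p.1 ∪ p.2 := by
  rw [transferRight, ← union_assoc, ← inter_union_distrib_left, hLU, inter_univ]

theorem fst_union_snd_transferLeft (hLU : L ∪ U = univ) (p : Set X × Set X) :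
    (transferLeft L U p).1 ∪ (transferLeft L U p).2 = p.1 ∪ p.2 := by
  rw [transferLeft, union_assoc, ← inter_union_distrib_left, hLU, inter_univ]

theorem transferRight_empty_univ (p : Set X × Set X) :
    transferRight ∅ univ p = (∅, p.1 ∪ p.2) := by
  simp [transferRight]

theorem transferRight_univ_empty (p : Set X × Set X) : transferRight univ ∅ p = p := by
  simp [transferRight]

theorem transferLeft_empty_univ (p : Set X × Set X) : transferLeft ∅ univ p = p := by
  simp [transferLeft]

theorem transferLeft_univ_empty (p : Set X × Set X) :
    transferLeft univ ∅ p = (p.1 ∪ p.2, ∅) := by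
  simp [transferLeft]

variable [Preorder X]

theorem transferRight_fst_subset_lowerBounds (hLU : L ⊆ lowerBounds U)
    (hp : p.1 ⊆ lowerBounds p.2) :
    (transferRight L U p).1 ⊆ lowerBounds (transferRight L U p).2 := by
  rintro a ⟨haA, haL⟩ b (⟨-, hbU⟩ | hbB)
  · exact hLU haL hbU
  · exact hp haA hbB

theorem transferLeft_fst_subset_lowerBounds (hLU : L ⊆ lowerBounds U)
    (hp : p.1 ⊆ lowerBounds p.2) :
    (transferLeft L U p).1 ⊆ lowerBounds (transferLeft L U p).2 := by
  rintro a (haA | ⟨-, haL⟩) b ⟨hbB, hbU⟩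
  · exact hp haA hbB
  · exact hLU haL hbU

end Transfer

theorem preimage_Iic_subset_lowerBounds_preimage_Ici {X Y : Type*} [Preorder X] [Preorder Y]
    (f : X ↪o Y) (y : Y) : f ⁻¹' Iic y ⊆ lowerBounds (f ⁻¹' Ici y) :=
  fun _ ha _ hb => f.le_iff_le.mp (le_trans ha hb)

section Fin

variable {n : ℕ}

theorem angle_iff_subset_lowerBounds {A B : Set (Fin n)} : Angle A B ↔ A ⊆ lowerBounds B :=
  Iff.rfl

theorem alphaE_eq_transferRight (i : ℕ) :
    alphaE (n := n) i = transferRight (Fin.val ⁻¹' Iio i) (Fin.val ⁻¹' Ici i) :=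
  rfl

theorem alphaO_eq_transferRight (i : ℕ) :
    alphaO (n := n) i = transferRight (Fin.val ⁻¹' Iic i) (Fin.val ⁻¹' Ici i) :=
  rfl

theorem betaE_eq_transferLeft (i : ℕ) :
    betaE (n := n) i = transferLeft (Fin.val ⁻¹' Iio i) (Fin.val ⁻¹' Ici i) :=
  rfl

theorem betaO_eq_transferLeft (i : ℕ) :
    betaO (n := n) i = transferLeft (Fin.val ⁻¹' Iic i) (Fin.val ⁻¹' Ici i) :=
  rfl

theorem val_preimage_Iic_subset_lowerBounds (i : ℕ) :
    (Fin.val ⁻¹' Iic i : Set (Fin n)) ⊆ lowerBounds (Fin.val ⁻¹' Ici i) :=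
  preimage_Iic_subset_lowerBounds_preimage_Ici (Fin.valOrderEmb n) i

theorem val_preimage_Iio_subset_preimage_Iic (i : ℕ) :
    (Fin.val ⁻¹' Iio i : Set (Fin n)) ⊆ Fin.val ⁻¹' Iic i :=
  preimage_mono Iio_subset_Iic_self

theorem val_preimage_Iio_subset_lowerBounds (i : ℕ) :
    (Fin.val ⁻¹' Iio i : Set (Fin n)) ⊆ lowerBounds (Fin.val ⁻¹' Ici i) :=
  (val_preimage_Iio_subset_preimage_Iic i).trans (val_preimage_Iic_subset_lowerBounds i)

theorem val_preimage_Iio_succ_subset_preimage_Iic (i : ℕ) :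
    (Fin.val ⁻¹' Iio (i + 1) : Set (Fin n)) ⊆ Fin.val ⁻¹' Iic i :=
  fun _ => Nat.le_of_lt_succ

theorem val_preimage_Ici_succ_subset_preimage_Ici (i : ℕ) :
    (Fin.val ⁻¹' Ici (i + 1) : Set (Fin n)) ⊆ Fin.val ⁻¹' Ici i :=
  preimage_mono (Ici_subset_Ici.mpr i.le_succ)

theorem val_preimage_Iio_union_preimage_Ici (i : ℕ) :
    (Fin.val ⁻¹' Iio i ∪ Fin.val ⁻¹' Ici i : Set (Fin n)) = univ := by
  rw [← preimage_union, Iio_union_Ici, preimage_univ]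

theorem val_preimage_Iic_union_preimage_Ici (i : ℕ) :
    (Fin.val ⁻¹' Iic i ∪ Fin.val ⁻¹' Ici i : Set (Fin n)) = univ := by
  rw [← preimage_union, Iic_union_Ici, preimage_univ]

theorem val_preimage_Iio_zero : (Fin.val ⁻¹' Iio 0 : Set (Fin n)) = ∅ := by
  ext a; simp

theorem val_preimage_Ici_zero : (Fin.val ⁻¹' Ici 0 : Set (Fin n)) = univ := by
  ext a; simp

theorem val_preimage_Iio_self : (Fin.val ⁻¹' Iio n : Set (Fin n)) = univ := by
  ext a; simp

theorem val_preimage_Ici_self : (Fin.val ⁻¹' Ici n : Set (Fin n)) = ∅ := by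
  ext a; simp

end Fin

theorem stmt12 {n : ℕ} (hn : 1 ≤ n) :
    -- all the maps send 𝕄 into 𝕄 ...
    (∀ i : ℕ, i ≤ n → ∀ p : Set (Fin n) × Set (Fin n), Angle p.1 p.2 →
      Angle (alphaE i p).1 (alphaE i p).2 ∧ Angle (alphaO i p).1 (alphaO i p).2 ∧
      Angle (betaE i p).1 (betaE i p).2 ∧ Angle (betaO i p).1 (betaO i p).2) ∧
    -- ... and are monotone
    (∀ i : ℕ, i ≤ n →
      Monotone (alphaE (n := n) i) ∧ Monotone (alphaO (n := n) i) ∧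
      Monotone (betaE (n := n) i) ∧ Monotone (betaO (n := n) i)) ∧
    -- σ ∘ α_j = σ and σ ∘ β_j = σ
    (∀ i : ℕ, i ≤ n → ∀ p : Set (Fin n) × Set (Fin n),
      (alphaE i p).1 ∪ (alphaE i p).2 = p.1 ∪ p.2 ∧
      (alphaO i p).1 ∪ (alphaO i p).2 = p.1 ∪ p.2 ∧
      (betaE i p).1 ∪ (betaE i p).2 = p.1 ∪ p.2 ∧
      (betaO i p).1 ∪ (betaO i p).2 = p.1 ∪ p.2) ∧
    -- extreme cases
    (∀ p : Set (Fin n) × Set (Fin n),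
      alphaE 0 p = (∅, p.1 ∪ p.2) ∧ alphaE n p = p ∧
      betaE 0 p = p ∧ betaE n p = (p.1 ∪ p.2, ∅)) ∧
    -- inequalities α_{2i} ≤ α_{2i+1} ≥ α_{2i+2} and β_{2i} ≤ β_{2i+1} ≥ β_{2i+2}
    (∀ i : ℕ, ∀ p : Set (Fin n) × Set (Fin n),
      alphaE i p ≤ alphaO i p ∧ alphaE (i + 1) p ≤ alphaO i p ∧
      betaE i p ≤ betaO i p ∧ betaE (i + 1) p ≤ betaO i p) := by
  simp only [angle_iff_subset_lowerBounds, alphaE_eq_transferRight, alphaO_eq_transferRight,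
    betaE_eq_transferLeft, betaO_eq_transferLeft]
  refine ⟨fun i _ p hp => ?preserves, fun i _ => ?monotone, fun i _ p => ?union, fun p => ?extreme,
    fun i p => ?zigzag⟩
  case preserves =>
    have hlt := val_preimage_Iio_subset_lowerBounds (n := n) i
    have hle := val_preimage_Iic_subset_lowerBounds (n := n) i
    exact ⟨transferRight_fst_subset_lowerBounds hlt hp, transferRight_fst_subset_lowerBounds hle hp,
      transferLeft_fst_subset_lowerBounds hlt hp, transferLeft_fst_subset_lowerBounds hle hp⟩
  case monotone => simp only [monotone_transferRight, monotone_transferLeft, and_self]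
  case union =>
    simp only [fst_union_snd_transferRight, fst_union_snd_transferLeft,
      val_preimage_Iio_union_preimage_Ici, val_preimage_Iic_union_preimage_Ici, and_self]
  case extreme =>
    simp only [val_preimage_Iio_zero, val_preimage_Ici_zero, val_preimage_Iio_self,
      val_preimage_Ici_self, transferRight_empty_univ, transferRight_univ_empty,
      transferLeft_empty_univ, transferLeft_univ_empty, and_self]
  case zigzag =>
    have hlt := val_preimage_Iio_subset_preimage_Iic (n := n) i
    have hlt_succ := val_preimage_Iio_succ_subset_preimage_Iic (n := n) i
    have hge_succ := val_preimage_Ici_succ_subset_preimage_Ici (n := n) i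
    exact ⟨transferRight_mono hlt Subset.rfl le_rfl, transferRight_mono hlt_succ hge_succ le_rfl,
      transferLeft_mono hlt Subset.rfl le_rfl, transferLeft_mono hlt_succ hge_succ le_rfl⟩
end

section
/- Let P be a finite poset and p ∈ P. Then the poset {σ ∈ s(P) : max(σ) ≤ p} of nonempty chains whose largest element is at most p, ordered by inclusion, is strongly contractible. (This says the monotone map max : s(P) → P is homotopy cofinal.) -/
/-- The poset `s(P)` of nonempty chains in `P`, ordered by inclusion. -/
abbrev Chains (P : Type*) [Preorder P] : Type _ :=
  {s : Set P // s.Nonempty ∧ IsChain (· ≤ ·) s}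

/-! Adjoining `p` to a chain lying below `p` gives a chain lying below `p`, so the inclusions
`σ ⊆ σ ∪ {p} ⊇ {p}` join the identity to the constant map at `{p}` in two steps. -/

theorem StronglyContractible.of_id_le_of_const_le {R : Type*} [Preorder R] {f : R →o R} {r : R}
    (id_le : OrderHom.id ≤ f) (const_le : OrderHom.const R r ≤ f) : StronglyContractible R :=
  ⟨r, .tail (.single (Or.inl id_le)) (Or.inr const_le)⟩

/-- The poset of nonempty chains bounded above by `p`; for a finite poset `P` this is
`{σ ∈ s(P) : max σ ≤ p}`. The bound is imposed on every element, as an infinite chain need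
not have a maximum. -/
abbrev ChainsBelow {P : Type*} [Preorder P] (p : P) : Type _ :=
  {σ : Chains P // ∀ x ∈ σ.1, x ≤ p}

namespace ChainsBelow

variable {P : Type*} [Preorder P]

/-- The one-element chain `{p}`, the point to which `ChainsBelow p` contracts. -/
def singletonTop (p : P) : ChainsBelow p :=
  ⟨⟨{p}, Set.singleton_nonempty p, IsChain.singleton⟩, fun _ hx => le_of_eq hx⟩

/-- The monotone self-map `σ ↦ σ ∪ {p}` of `ChainsBelow p`, the middle term of the contraction. -/
def insertTop (p : P) : ChainsBelow p →o ChainsBelow p where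
  toFun σ :=
    ⟨⟨insert p σ.1.1, Set.insert_nonempty p σ.1.1,
      σ.1.2.2.insert fun x hx _ => Or.inr (σ.2 x hx)⟩,
      Set.forall_mem_insert.2 ⟨le_rfl, σ.2⟩⟩
  monotone' _ _ hστ := Set.insert_subset_insert hστ

theorem id_le_insertTop (p : P) : OrderHom.id ≤ insertTop p :=
  fun σ => Set.subset_insert p σ.1.1

theorem const_singletonTop_le_insertTop (p : P) :
    OrderHom.const (ChainsBelow p) (singletonTop p) ≤ insertTop p :=
  fun σ => Set.singleton_subset_iff.2 (Set.mem_insert p σ.1.1)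

end ChainsBelow

theorem stmt14_general {P : Type*} [Preorder P] (p : P) :
    StronglyContractible {σ : Chains P // ∀ x ∈ σ.1, x ≤ p} :=
  .of_id_le_of_const_le (ChainsBelow.id_le_insertTop p)
    (ChainsBelow.const_singletonTop_le_insertTop p)

/-- The poset `{σ ∈ s(P) : max σ ≤ p}` (equivalently, the nonempty chains all of whose
elements are `≤ p`) is strongly contractible; i.e. `max : s(P) → P` is homotopy cofinal. -/
theorem stmt14 {P : Type*} [PartialOrder P] [Fintype P] (p : P) :
    StronglyContractible {σ : Chains P // ∀ x ∈ σ.1, x ≤ p} :=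
  stmt14_general p
end

section
/- Let 𝒯 be a triangulated category with small coproducts and let 𝒰 be a localising subcategory of 𝒯 (a thick triangulated subcategory closed under small coproducts) such that for every object X of 𝒯 the comma category X/𝒰 (objects: morphisms X → U with U ∈ 𝒰) has a weakly initial set, i.e. a small set S of objects such that every object of X/𝒰 receives a morphism from some member of S. Then the Verdier quotient 𝒯/𝒰 has small hom sets (is locally small). -/
open CategoryTheory Limits Pretriangulated

universe v u

/-- The class of morphisms whose cone lies in the subcategory of objects satisfying `P`:
inverting these gives the Verdier quotient `𝒯/𝒰`. -/
def coneW (C : Type u) [Category.{v} C] [HasZeroObject C] [Preadditive C] [HasShift C ℤ]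
    [∀ n : ℤ, (CategoryTheory.shiftFunctor C n).Additive] [Pretriangulated C]
    (P : C → Prop) : MorphismProperty C := fun X Y f =>
  ∃ (Z : C) (g : Y ⟶ Z) (h : Z ⟶ X⟦(1 : ℤ)⟧),
    Triangle.mk f g h ∈ (distTriang C) ∧ P Z

/-!
Completing each member `X ⟶ U i` of a weakly initial family of `X/𝒰` to a distinguished triangle
`F i ⟶ X ⟶ U i ⟶` yields a small family of morphisms into `X` with cone in `𝒰`. Every cospan
`X ⟶ B ⟵ A` whose second leg has cone in `𝒰` can be completed to a commutative square over one of
the `F i ⟶ X`: the composite of `X ⟶ B` with the map to the cone factors through some `X ⟶ U i`,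
and one completes to a morphism of triangles. This Ore condition makes every morphism of the
localization a right fraction whose denominator is a finite composite of the chosen morphisms, and
only a small set of such composites ends at a given object.
-/

universe w v' u'

theorem small_setOf_reflTransGen {α : Type u} {r : α → α → Prop}
    (hr : ∀ a, Small.{w} {b | r a b}) (a : α) :
    Small.{w} {b | Relation.ReflTransGen r a b} := by
  let layer : ℕ → Set α := fun n ↦ (fun s ↦ ⋃ x ∈ s, {y | r x y})^[n] {a}
  have layer_succ (n : ℕ) : layer (n + 1) = ⋃ x ∈ layer n, {y | r x y} :=
    Function.iterate_succ_apply' _ n _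
  have small_layer (n : ℕ) : Small.{w} (layer n) := by
    induction n with
    | zero => exact small_single a
    | succ n _ =>
      rw [layer_succ]
      infer_instance
  refine small_subset (s := ⋃ n, layer n) fun b hb ↦ Set.mem_iUnion.2 ?_
  induction hb with
  | refl => exact ⟨0, rfl⟩
  | tail _ hbc ih =>
    obtain ⟨n, hn⟩ := ih
    exact ⟨n + 1, by rw [layer_succ]; exact Set.mem_biUnion hn hbc⟩

section

variable {C : Type u} [Category.{v} C] {S W : MorphismProperty C}

/-- The relation that `b` arises from `a` by precomposing the structure morphism of `a` with one
morphism of `S`; iterating it from `𝟙 X` reaches the finite composites of `S` that end at `X`. -/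
def Prolongs (S : MorphismProperty C) {X : C} (a b : Over X) : Prop :=
  ∃ t : Over a.left, S t.hom ∧ Over.mk (t.hom ≫ a.hom) = b

theorem small_setOf_prolongs {X : C} (a : Over X)
    [ObjectProperty.Small.{w} (S.overObj (X := a.left))] : Small.{w} {b | Prolongs S a b} :=
  small_of_surjective
    (f := fun t : Subtype (S.overObj (X := a.left)) ↦
      (⟨Over.mk (t.1.hom ≫ a.hom), t.1, t.2, rfl⟩ : {b | Prolongs S a b}))
    fun ⟨_, t, ht, hb⟩ ↦ ⟨⟨t, ht⟩, Subtype.ext hb⟩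

theorem reflTransGen_prolongs_of_multiplicativeClosure {A X : C} {s : A ⟶ X}
    (hs : S.multiplicativeClosure s) :
    Relation.ReflTransGen (Prolongs S) (Over.mk (𝟙 X)) (Over.mk s) := by
  rw [S.multiplicativeClosure_eq_multiplicativeClosure'] at hs
  induction hs with
  | of s hs => exact .single ⟨Over.mk s, hs, by simp⟩
  | id => exact .refl
  | of_comp t s ht _ ih => exact ih.tail ⟨Over.mk t, ht, rfl⟩

theorem small_overObj_multiplicativeClosure
    (hS : ∀ X : C, ObjectProperty.Small.{w} (S.overObj (X := X))) (X : C) :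
    ObjectProperty.Small.{w} (S.multiplicativeClosure.overObj (X := X)) := by
  have := small_setOf_reflTransGen (fun a : Over X ↦ small_setOf_prolongs (S := S) a)
    (Over.mk (𝟙 X))
  exact small_subset (s := {b | Relation.ReflTransGen (Prolongs S) (Over.mk (𝟙 X)) b})
    fun _ hs ↦ reflTransGen_prolongs_of_multiplicativeClosure hs

theorem small_rightFraction [LocallySmall.{w} C] (X Y : C)
    [ObjectProperty.Small.{w} (S.overObj (X := X))] : Small.{w} (S.RightFraction X Y) :=
  small_of_surjective
    (f := fun z : Σ s : Subtype (S.overObj (X := X)), (s.1.left ⟶ Y) ↦ ⟨z.1.1.hom, z.1.2, z.2⟩)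
    fun z ↦ ⟨⟨⟨Over.mk z.s, z.hs⟩, z.f⟩, rfl⟩

theorem isInvertedBy_multiplicativeClosure {D : Type u'} [Category.{v'} D] {L : C ⥤ D}
    (hL : S.IsInvertedBy L) : S.multiplicativeClosure.IsInvertedBy L :=
  (S.multiplicativeClosure_le_iff ((MorphismProperty.isomorphisms D).inverseImage L)).2 hL

/-- The right Ore condition, with squares whose denominators may be chosen in a class `S` possibly
smaller than `W`: every cospan `X ⟶ B ⟵ A` with `A ⟶ B` in `W` is completed to a commutative square
by a span `X ⟵ X' ⟶ A` with `X' ⟶ X` in `S`. -/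
def RightOre (S W : MorphismProperty C) : Prop :=
  ∀ ⦃X A : C⦄ (φ : W.LeftFraction X A), ∃ ψ : S.RightFraction X A, ψ.s ≫ φ.f = ψ.f ≫ φ.s

namespace RightOre

theorem anti_right {W' : MorphismProperty C} (h : RightOre S W) (hW : W' ≤ W) : RightOre S W' :=
  fun _ _ φ ↦ h ⟨φ.f, φ.s, hW _ φ.hs⟩

theorem multiplicativeClosure (h : RightOre S W) :
    RightOre S.multiplicativeClosure W.multiplicativeClosure := by
  rintro X A ⟨f, t, ht⟩
  induction ht generalizing X with
  | of t ht =>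
    obtain ⟨ψ, hψ⟩ := h ⟨f, t, ht⟩
    exact ⟨⟨ψ.s, .of _ ψ.hs, ψ.f⟩, hψ⟩
  | id => exact ⟨⟨𝟙 X, .id X, f⟩, by simp⟩
  | comp_of t₁ t₂ _ ht₂ ih =>
    obtain ⟨ψ₂, hψ₂⟩ := h ⟨f, t₂, ht₂⟩
    obtain ⟨ψ₁, hψ₁⟩ := ih ψ₂.f
    refine ⟨⟨ψ₁.s ≫ ψ₂.s, .comp_of _ _ ψ₁.hs ψ₂.hs, ψ₁.f⟩, ?_⟩
    calc (ψ₁.s ≫ ψ₂.s) ≫ f = ψ₁.s ≫ ψ₂.f ≫ t₂ := by rw [Category.assoc, hψ₂]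
      _ = ψ₁.f ≫ t₁ ≫ t₂ := by rw [reassoc_of% hψ₁]

theorem exists_map_eq_map_comp_map [S.IsStableUnderComposition] (h : RightOre S S)
    {D : Type u'} [Category.{v'} D] {L : C ⥤ D} (hL : S.IsInvertedBy L) {X Y Z : C}
    (z₁ : S.RightFraction X Y) (z₂ : S.RightFraction Y Z) :
    ∃ z : S.RightFraction X Z, z.map L hL = z₁.map L hL ≫ z₂.map L hL := by
  obtain ⟨ψ, hψ⟩ := h ⟨z₁.f, z₂.s, z₂.hs⟩
  let z : S.RightFraction X Z := ⟨ψ.s ≫ z₁.s, S.comp_mem _ _ ψ.hs z₁.hs, ψ.f ≫ z₂.f⟩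
  have := hL _ z.hs
  refine ⟨z, (cancel_epi (L.map z.s)).1 ?_⟩
  have hLψ : L.map ψ.s ≫ L.map z₁.f = L.map ψ.f ≫ L.map z₂.s := by
    simpa only [L.map_comp] using congr_arg L.map hψ
  calc L.map z.s ≫ z.map L hL = L.map ψ.f ≫ L.map z₂.f := by
        rw [z.map_s_comp_map, L.map_comp]
    _ = L.map ψ.s ≫ L.map z₁.f ≫ z₂.map L hL := by simp [reassoc_of% hLψ]
    _ = L.map z.s ≫ z₁.map L hL ≫ z₂.map L hL := by simp [z]

theorem exists_map_eq_inv_map (h : RightOre S W) {D : Type u'} [Category.{v'} D] {L : C ⥤ D}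
    (hL : S.IsInvertedBy L) {A B : C} (t : A ⟶ B) (ht : W t) [IsIso (L.map t)] :
    ∃ z : S.RightFraction B A, z.map L hL = inv (L.map t) := by
  obtain ⟨z, hz⟩ := h ⟨𝟙 B, t, ht⟩
  have := hL _ z.hs
  refine ⟨z, (cancel_epi (L.map z.s)).1 ?_⟩
  rw [z.map_s_comp_map, IsIso.eq_comp_inv, ← L.map_comp, ← hz, Category.comp_id]

theorem exists_rightFraction_map_eq [S.IsMultiplicative] (hSS : RightOre S S) (hSW : RightOre S W)
    (hQ : S.IsInvertedBy W.Q) {X Y : C} (φ : W.Q.obj X ⟶ W.Q.obj Y) :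
    ∃ z : S.RightFraction X Y, z.map W.Q hQ = φ := by
  -- An object `A` of `W.Localization` is definitionally `W.Q.obj A.as.obj`.
  let fractions : MorphismProperty W.Localization := fun A B φ ↦
    ∃ z : S.RightFraction A.as.obj B.as.obj, z.map W.Q hQ = φ
  have : fractions.IsStableUnderComposition := ⟨by
    rintro _ _ _ _ _ ⟨z₁, rfl⟩ ⟨z₂, rfl⟩
    exact hSS.exists_map_eq_map_comp_map hQ z₁ z₂⟩
  suffices fractions = ⊤ from this.ge φ trivial
  apply Localization.Construction.morphismProperty_eq_top
  · exact fun X Y f ↦ ⟨.ofHom S f, MorphismProperty.RightFraction.map_ofHom S f W.Q hQ⟩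
  · intro A B t ht
    have := W.Q_inverts t ht
    obtain ⟨z, hz⟩ := hSW.exists_map_eq_inv_map hQ t ht
    have hinv := IsIso.inv_eq_of_hom_inv_id (Localization.Construction.wIso t ht).hom_inv_id
    exact ⟨z, hz.trans hinv⟩

end RightOre

theorem locallySmall_localization_of_rightOre [LocallySmall.{w} C] (hSW : S ≤ W)
    (hore : RightOre S W) (hsmall : ∀ X : C, ObjectProperty.Small.{w} (S.overObj (X := X))) :
    LocallySmall.{w} W.Localization := by
  have hQ : S.multiplicativeClosure.IsInvertedBy W.Q :=
    isInvertedBy_multiplicativeClosure fun _ _ s hs ↦ W.Q_inverts s (hSW s hs)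
  have hclosure := hore.multiplicativeClosure
  have hself := hclosure.anti_right (MorphismProperty.multiplicativeClosure_monotone hSW)
  have hW := hclosure.anti_right W.le_multiplicativeClosure
  refine ⟨fun A B ↦ ?_⟩
  have := small_overObj_multiplicativeClosure hsmall A.as.obj
  have := small_rightFraction (S := S.multiplicativeClosure) A.as.obj B.as.obj
  exact small_of_surjective
    (f := fun z : S.multiplicativeClosure.RightFraction A.as.obj B.as.obj ↦ z.map W.Q hQ)
    (hself.exists_rightFraction_map_eq hW hQ)

theorem small_overObj_ofHoms {ι : C → Type w} {F : ∀ X, ι X → C} (p : ∀ X i, F X i ⟶ X) (X : C) :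
    ObjectProperty.Small.{w}
      ((MorphismProperty.ofHoms fun a : Σ X, ι X ↦ p a.1 a.2).overObj (X := X)) := by
  refine small_of_surjective (f := fun i : ι X ↦ ⟨Over.mk (p X i), .mk (⟨X, i⟩ : Σ X, ι X)⟩) ?_
  rintro ⟨⟨A, ⟨⟨⟩⟩, f⟩, hf⟩
  change MorphismProperty.ofHoms _ f at hf
  obtain ⟨⟨X, i⟩⟩ := hf
  exact ⟨i, rfl⟩

theorem locallySmall_localization_of_exists_family [LocallySmall.{w} C]
    (h : ∀ X : C, ∃ (ι : Type w) (F : ι → C) (p : ∀ i, F i ⟶ X), (∀ i, W (p i)) ∧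
      ∀ ⦃A B : C⦄ (f : X ⟶ B) (t : A ⟶ B), W t → ∃ (i : ι) (g : F i ⟶ A), p i ≫ f = g ≫ t) :
    LocallySmall.{w} W.Localization := by
  choose ι F p hp hlift using h
  refine locallySmall_localization_of_rightOre ?_ ?_ (small_overObj_ofHoms p)
  · rintro _ _ _ ⟨a⟩
    exact hp a.1 a.2
  · intro X A φ
    obtain ⟨i, g, hg⟩ := hlift X φ.f φ.s φ.hs
    exact ⟨⟨p X i, .mk (⟨X, i⟩ : Σ X, ι X), g⟩, hg⟩

end

section

variable {C : Type u} [Category.{v} C] [HasZeroObject C] [Preadditive C] [HasShift C ℤ]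
  [∀ n : ℤ, (CategoryTheory.shiftFunctor C n).Additive] [Pretriangulated C] {P : C → Prop}

theorem exists_family_coneW_of_weaklyInitial {X : C} {ι : Type w} {U : ι → C} (e : ∀ i, X ⟶ U i)
    (hU : ∀ i, P (U i))
    (he : ∀ V : C, P V → ∀ g : X ⟶ V, ∃ (i : ι) (h : U i ⟶ V), e i ≫ h = g) :
    ∃ (F : ι → C) (p : ∀ i, F i ⟶ X), (∀ i, coneW C P (p i)) ∧
      ∀ ⦃A B : C⦄ (f : X ⟶ B) (t : A ⟶ B), coneW C P t →
        ∃ (i : ι) (g : F i ⟶ A), p i ≫ f = g ≫ t := by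
  choose F p δ hT using fun i ↦ distinguished_cocone_triangle₁ (e i)
  refine ⟨F, p, fun i ↦ ⟨_, _, _, hT i, hU i⟩, ?_⟩
  rintro A B f t ⟨V, q, _, hV, hPV⟩
  obtain ⟨i, c, hc⟩ := he V hPV (f ≫ q)
  obtain ⟨g, hg, -⟩ := complete_distinguished_triangle_morphism₁ _ _ (hT i) hV f c hc
  exact ⟨i, g, hg⟩

end

theorem stmt15_general (C : Type u) [Category.{v} C] [LocallySmall.{w} C] [HasZeroObject C]
    [Preadditive C] [HasShift C ℤ] [∀ n : ℤ, (CategoryTheory.shiftFunctor C n).Additive]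
    [Pretriangulated C] (P : C → Prop)
    (hweak : ∀ X : C, ∃ (ι : Type w) (U : ι → C) (e : ∀ i, X ⟶ U i),
      (∀ i, P (U i)) ∧
        ∀ (V : C), P V → ∀ g : X ⟶ V, ∃ (i : ι) (h : U i ⟶ V), e i ≫ h = g) :
    LocallySmall.{w} (coneW C P).Localization :=
  locallySmall_localization_of_exists_family fun X ↦
    let ⟨ι, _, e, hU, he⟩ := hweak X
    ⟨ι, exists_family_coneW_of_weaklyInitial e hU he⟩

/-- If `𝒰` is a localising subcategory (thick triangulated, closed under small coproducts)
of a triangulated category `𝒯` with small coproducts, and every comma category `X/𝒰` has a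
weakly initial set, then the Verdier quotient `𝒯/𝒰` is locally small. -/
theorem stmt15 (C : Type u) [Category.{v} C] [HasZeroObject C] [Preadditive C]
    [HasShift C ℤ] [∀ n : ℤ, (CategoryTheory.shiftFunctor C n).Additive]
    [Pretriangulated C] [HasCoproducts.{v} C]
    (P : C → Prop)
    (hzero : ∀ Z : C, IsZero Z → P Z)
    (hiso : ∀ ⦃X Y : C⦄, (X ≅ Y) → P X → P Y)
    (hshift : ∀ (X : C) (n : ℤ), P X → P (X⟦n⟧))
    (hext : ∀ (T : Triangle C), T ∈ (distTriang C) → P T.obj₁ → P T.obj₃ → P T.obj₂)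
    (hretract : ∀ ⦃X Y : C⦄ (i : X ⟶ Y) (r : Y ⟶ X), i ≫ r = 𝟙 X → P Y → P X)
    (hcoprod : ∀ ⦃α : Type v⦄ (f : α → C), (∀ a, P (f a)) → P (∐ f))
    (hweak : ∀ X : C, ∃ (ι : Type v) (U : ι → C) (e : ∀ i, X ⟶ U i),
      (∀ i, P (U i)) ∧
        ∀ (V : C), P V → ∀ g : X ⟶ V, ∃ (i : ι) (h : U i ⟶ V), e i ≫ h = g) :
    LocallySmall.{v} (coneW C P).Localization := by
  exact stmt15_general.{v, u, v} C P hweak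
end
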